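/- Let G be a torsion-free hyperbolic group, let h ∈ G be a nontrivial element, and let ω ∈ G. Then ω is conjugate in G to at most one element of the cyclic subgroup ⟨h⟩: if ω is conjugate to h^m and to h^n for integers m, n, then m = n. -/

import Mathlib

/-- The word metric on a group `G` with respect to a generating set `S`:
`wordDist S g h` is the least length of a word in `S ∪ S⁻¹` representing `g⁻¹ * h`. -/
noncomputable def wordDist {G : Type*} [Group G] (S : Set G) (g h : G) : ℝ :=
  sInf {r : ℝ | ∃ l : List G, (∀ x ∈ l, x ∈ S ∨ x⁻¹ ∈ S) ∧ l.prod = g⁻¹ * h ∧ r = l.length}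

/-- The Gromov product `(x|y)_w` with respect to the word metric for `S`. -/
noncomputable def gromovProd {G : Type*} [Group G] (S : Set G) (w x y : G) : ℝ :=
  (wordDist S x w + wordDist S y w - wordDist S x y) / 2

/-- A group is (Gromov) hyperbolic if it admits a finite generating set `S` such that
the word metric `d_S` satisfies the Gromov product four-point condition for some `δ ≥ 0`. -/
def IsHyperbolicGroup (G : Type*) [Group G] : Prop :=
  ∃ S : Set G, S.Finite ∧ Subgroup.closure S = ⊤ ∧
    ∃ δ : ℝ, 0 ≤ δ ∧ ∀ w x y z : G,
      gromovProd S w x y ≥ min (gromovProd S w x z) (gromovProd S w y z) - δ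

/-!
The stable length `τ g = lim N (gⁿ) / n` of the word norm `N` is invariant under conjugation and
satisfies `τ (gⁿ) = |n| τ g`, so as soon as `0 < τ h`, a power `h ^ m` can only be conjugate to
`h ^ m` and `h ^ (-m)`.

Elements of infinite order have `0 < τ`. Indeed, if `τ g = 0` then hyperbolicity gives
`N (k ^ 2) ≤ N k + 2δ` for every conjugate `k` of a power of `g`; moving the base point along a
geodesic towards the longest among `g, …, g ^ M` then shortens all the long ones, so that suitable
conjugates of `g, …, g ^ M` lie in a ball whose radius does not depend on `M`, and the pigeonhole
principle applies.

Finally, if `t` conjugates `g` to `g⁻¹`, then `g` and `t²` commute and `t` conjugates `g t²` to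
`g⁻¹ t²`. The four-point condition for the parallelograms spanned by `gⁿ` and `t²ⁿ` gives
`τ g + τ (t²) ≤ max (τ g) (τ (t²))`, so `g` or `t` has finite order. In the absence
of involutions a `t` of finite order has odd order, so it is a power of `t²` and commutes with `g`;
then `g = g⁻¹`.
-/

open Filter Topology

/-! ### Stable length -/

section StableLength

variable {G : Type*} [Group G] (N : GroupSeminorm G)

theorem map_mul_mul_inv_le (x g : G) : N (x * g * x⁻¹) ≤ N g + 2 * N x := by
  have h₁ := map_mul_le_add N (x * g) x⁻¹
  have h₂ := map_mul_le_add N x g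
  rw [map_inv_eq_map] at h₁
  linarith

theorem subadditive_map_pow (g : G) : Subadditive fun n => N (g ^ n) := fun a b => by
  simpa only [pow_add] using map_mul_le_add N (g ^ a) (g ^ b)

/-- The stable (or translation) length of `g`, that is, the limit of `N (g ^ n) / n`. -/
noncomputable def stableLength (g : G) : ℝ := (subadditive_map_pow N g).lim

theorem tendsto_stableLength (g : G) :
    Tendsto (fun n : ℕ => N (g ^ n) / n) atTop (𝓝 (stableLength N g)) :=
  (subadditive_map_pow N g).tendsto_lim
    ⟨0, by rintro _ ⟨n, rfl⟩; exact div_nonneg (apply_nonneg N _) n.cast_nonneg⟩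

theorem stableLength_nonneg (g : G) : 0 ≤ stableLength N g :=
  ge_of_tendsto' (tendsto_stableLength N g) fun n =>
    div_nonneg (apply_nonneg N _) n.cast_nonneg

theorem stableLength_inv (g : G) : stableLength N g⁻¹ = stableLength N g := by
  simp only [stableLength, inv_pow, map_inv_eq_map]

theorem stableLength_pow (g : G) (m : ℕ) : stableLength N (g ^ m) = m * stableLength N g := by
  rcases m.eq_zero_or_pos with rfl | hm
  · refine tendsto_nhds_unique (tendsto_stableLength N _) ?_
    simp
  · have hsub := ((tendsto_stableLength N g).comp
      (tendsto_id.const_mul_atTop' hm)).const_mul (m : ℝ)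
    refine tendsto_nhds_unique (tendsto_stableLength N (g ^ m)) (hsub.congr fun n => ?_)
    simp only [Function.comp_apply, id, pow_mul, Nat.cast_mul]
    rw [← mul_div_assoc, mul_div_mul_left _ _ (Nat.cast_pos.mpr hm).ne']

theorem stableLength_zpow (g : G) (m : ℤ) :
    stableLength N (g ^ m) = |(m : ℝ)| * stableLength N g := by
  obtain ⟨k, rfl | rfl⟩ := m.eq_nat_or_neg
  · simp [stableLength_pow]
  · simp [stableLength_pow, stableLength_inv]

theorem stableLength_conj_le (x g : G) : stableLength N (x * g * x⁻¹) ≤ stableLength N g := by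
  have hlim := (tendsto_stableLength N g).add (tendsto_const_div_atTop_nhds_zero_nat (2 * N x))
  rw [add_zero] at hlim
  refine le_of_tendsto_of_tendsto' (tendsto_stableLength N _) hlim fun n => ?_
  rw [← add_div, conj_pow]
  gcongr
  exact map_mul_mul_inv_le N x (g ^ n)

variable {N}

theorem stableLength_eq_of_isConj {g k : G} (h : IsConj g k) :
    stableLength N g = stableLength N k := by
  have le_of_isConj {a b : G} (hab : IsConj a b) : stableLength N b ≤ stableLength N a := by
    obtain ⟨x, rfl⟩ := isConj_iff.mp hab
    exact stableLength_conj_le N x a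
  exact le_antisymm (le_of_isConj h.symm) (le_of_isConj h)

theorem abs_eq_abs_of_isConj_zpow {h : G} (hh : stableLength N h ≠ 0) {m n : ℤ}
    (hmn : IsConj (h ^ m) (h ^ n)) : |m| = |n| := by
  have hτ := stableLength_eq_of_isConj (N := N) hmn
  rw [stableLength_zpow, stableLength_zpow] at hτ
  exact_mod_cast mul_right_cancel₀ hh hτ

theorem stableLength_add_le_max {a b c d : G} {D : ℝ}
    (h : ∀ n : ℕ, N (a ^ n) + N (b ^ n) ≤ 2 * max (N (c ^ n)) (N (d ^ n)) + D) :
    stableLength N a + stableLength N b ≤ 2 * max (stableLength N c) (stableLength N d) := by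
  have hlim := (((tendsto_stableLength N c).max (tendsto_stableLength N d)).const_mul 2).add
    (tendsto_const_div_atTop_nhds_zero_nat D)
  rw [add_zero] at hlim
  refine le_of_tendsto_of_tendsto'
    ((tendsto_stableLength N a).add (tendsto_stableLength N b)) hlim fun n => ?_
  rw [← add_div, max_div_div_right n.cast_nonneg, ← mul_div_assoc, ← add_div]
  exact div_le_div_of_nonneg_right (h n) n.cast_nonneg

end StableLength

/-! ### Hyperbolic norms -/

/-- The four-point condition for the left-invariant metric `d x y = N (x⁻¹ * y)`. With `D = 2 * δ`
it is the inequality `(x|y)_w ≥ min (x|z)_w (y|z)_w - δ` between Gromov products, written without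
subtraction. -/
def IsHyperbolicNorm {G : Type*} [Group G] (N : GroupSeminorm G) (D : ℝ) : Prop :=
  ∀ x y z w : G, N (x⁻¹ * y) + N (z⁻¹ * w) ≤
    max (N (x⁻¹ * z) + N (y⁻¹ * w)) (N (x⁻¹ * w) + N (y⁻¹ * z)) + D

/-- Geodesicity of the left-invariant metric `d x y = N (x⁻¹ * y)`, tested at integer distances
only, as is appropriate for word norms: `z` is the point at distance `r` from `1` on a geodesic from
`1` to `g`. -/
def IsGeodesicNorm {G : Type*} [Group G] (N : GroupSeminorm G) : Prop :=
  ∀ (g : G) (r : ℕ), r ≤ N g → ∃ z, N z = r ∧ N (z⁻¹ * g) = N g - r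

/-- Properness of a norm on a discrete group: balls are finite. -/
def IsProperNorm {G : Type*} [Group G] (N : GroupSeminorm G) : Prop :=
  ∀ R : ℝ, {g | N g ≤ R}.Finite

/-- The radius about `1` of the orbit segment `{1, g, …, g ^ M}`. -/
noncomputable def powersRadius {G : Type*} [Group G] (N : GroupSeminorm G) (M : ℕ) (g : G) : ℝ :=
  (Finset.range (M + 1)).sup' Finset.nonempty_range_add_one fun i => N (g ^ i)

section PowersRadius

variable {G : Type*} [Group G] {N : GroupSeminorm G} {M : ℕ} {g : G}

theorem powersRadius_le_iff {R : ℝ} : powersRadius N M g ≤ R ↔ ∀ i ≤ M, N (g ^ i) ≤ R := by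
  simp [powersRadius]

theorem map_pow_le_powersRadius {i : ℕ} (hi : i ≤ M) : N (g ^ i) ≤ powersRadius N M g :=
  powersRadius_le_iff.mp le_rfl i hi

theorem powersRadius_nonneg : 0 ≤ powersRadius N M g :=
  (apply_nonneg N _).trans (map_pow_le_powersRadius M.zero_le)

theorem exists_map_pow_eq_powersRadius : ∃ j ≤ M, N (g ^ j) = powersRadius N M g := by
  obtain ⟨j, hj, hjR⟩ := Finset.exists_mem_eq_sup' (Finset.nonempty_range_add_one (n := M))
    fun i => N (g ^ i)
  exact ⟨j, Finset.mem_range_succ_iff.mp hj, hjR.symm⟩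

theorem map_inv_pow_mul_pow_le_powersRadius {i j : ℕ} (hi : i ≤ M) (hj : j ≤ M) :
    N ((g ^ i)⁻¹ * g ^ j) ≤ powersRadius N M g := by
  rcases le_total i j with hij | hji
  · rw [← (Commute.refl g).pow_pow j i |>.inv_right.eq, ← pow_sub g hij]
    exact map_pow_le_powersRadius (by omega)
  · rw [← map_inv_eq_map N, mul_inv_rev, inv_inv,
      ← (Commute.refl g).pow_pow i j |>.inv_right.eq, ← pow_sub g hji]
    exact map_pow_le_powersRadius (by omega)

theorem isOfFinOrder_of_powersRadius_conj_le (hprop : IsProperNorm N) {R : ℝ}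
    (h : ∀ M, ∃ x, powersRadius N M (x * g * x⁻¹) ≤ R) : IsOfFinOrder g := by
  set ball := (hprop R).toFinset with hball
  obtain ⟨x, hx⟩ := h ball.card
  have hmaps : Set.MapsTo (fun i => (x * g * x⁻¹) ^ i) (Finset.range (ball.card + 1)) ball :=
    fun i hi => by
      simpa [hball] using powersRadius_le_iff.mp hx i (Finset.mem_range_succ_iff.mp hi)
  obtain ⟨i, -, j, -, hij, hpow⟩ := Finset.exists_ne_map_eq_of_card_lt_of_maps_to
    (by simp only [Finset.card_range, Nat.lt_succ_self]) hmaps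
  have hconj : IsOfFinOrder (x * g * x⁻¹) := by
    by_contra hinf
    exact hij (injective_pow_iff_not_isOfFinOrder.mpr hinf hpow)
  exact (isConj_iff.mpr ⟨x, rfl⟩ : IsConj g (x * g * x⁻¹)).symm.isOfFinOrder hconj

end PowersRadius

namespace IsHyperbolicNorm

variable {G : Type*} [Group G] {N : GroupSeminorm G} {D : ℝ}

theorem nonneg (hN : IsHyperbolicNorm N D) : 0 ≤ D := by
  simpa using hN 1 1 1 1

theorem le_or_le (hN : IsHyperbolicNorm N D) (x y z w : G) :
    N (x⁻¹ * y) + N (z⁻¹ * w) ≤ N (x⁻¹ * z) + N (y⁻¹ * w) + D ∨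
      N (x⁻¹ * y) + N (z⁻¹ * w) ≤ N (x⁻¹ * w) + N (y⁻¹ * z) + D := by
  simpa only [← sub_le_iff_le_add, le_max_iff] using hN x y z w

theorem map_pow_add_le_map_pow_succ (hN : IsHyperbolicNorm N D) {g : G}
    (hg : 0 < N (g ^ 2) - N g - D) (n : ℕ) :
    N (g ^ (n + 1)) + (N (g ^ 2) - N g - D) ≤ N (g ^ (n + 2)) := by
  induction n with
  | zero =>
    rw [zero_add, zero_add, pow_one]
    linarith [hN.nonneg]
  | succ n ih =>
    have e₁ : g⁻¹ * g ^ (n + 3) = g ^ (n + 2) := by rw [pow_succ' g (n + 2), inv_mul_cancel_left]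
    have e₂ : (g ^ 2)⁻¹ * g ^ (n + 3) = g ^ (n + 1) := by
      rw [show n + 3 = 2 + (n + 1) by omega, pow_add, inv_mul_cancel_left]
    have e₃ : (g ^ 2)⁻¹ * g = g⁻¹ := by group
    rcases hN.le_or_le 1 (g ^ 2) g (g ^ (n + 3)) with h4 | h4 <;>
      simp only [e₁, e₂, e₃, inv_one, one_mul, map_inv_eq_map] at h4 <;> linarith

theorem sub_sub_le_stableLength (hN : IsHyperbolicNorm N D) (g : G) :
    N (g ^ 2) - N g - D ≤ stableLength N g := by
  rcases le_or_gt (N (g ^ 2) - N g - D) 0 with hle | hpos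
  · exact hle.trans (stableLength_nonneg N g)
  have hgrowth (n : ℕ) : n * (N (g ^ 2) - N g - D) ≤ N (g ^ (n + 1)) := by
    induction n with
    | zero => simp
    | succ n ih =>
      have hstep := hN.map_pow_add_le_map_pow_succ hpos n
      push_cast
      linarith
  set c := N (g ^ 2) - N g - D
  have hlim := (tendsto_stableLength N g).add (tendsto_const_div_atTop_nhds_zero_nat c)
  rw [add_zero] at hlim
  refine ge_of_tendsto hlim ?_
  filter_upwards [eventually_gt_atTop 0] with n hn
  obtain ⟨n, rfl⟩ := Nat.exists_eq_add_one_of_ne_zero hn.ne'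
  rw [← add_div, le_div_iff₀ (by positivity)]
  have := hgrowth n
  push_cast
  linarith

theorem map_inv_mul_mul_le (hN : IsHyperbolicNorm N D) {g k z : G}
    (hsq : N (g ^ 2) ≤ N g + D) (hz : N (z⁻¹ * k) = N k - N z) (hgk : N (g⁻¹ * k) ≤ N k)
    (hzg : 2 * N z ≤ N g) :
    N (z⁻¹ * g * z) ≤ max 0 (N g - 2 * N z + 3 * D) + D := by
  have hzg_le : N (z⁻¹ * g) ≤ N g - N z + D := by
    rcases hN.le_or_le z g 1 k with h4 | h4 <;>
      simp only [inv_one, one_mul, mul_one, map_inv_eq_map] at h4 <;> linarith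
  have hgz_le : N (g * z) ≤ N g - N z + 2 * D := by
    have h4 := hN.le_or_le z g⁻¹ 1 g
    rw [← mul_inv_rev, inv_inv, ← pow_two] at h4
    simp only [inv_one, one_mul, mul_one, map_inv_eq_map] at h4
    rcases h4 with h4 | h4 <;> linarith
  have h4 := hN.le_or_le z (g * z) 1 g
  rw [show (g * z)⁻¹ * g = z⁻¹ by group, ← mul_assoc] at h4
  simp only [inv_one, one_mul, mul_one, map_inv_eq_map] at h4
  rw [← sub_le_iff_le_add, le_max_iff]
  exact h4.imp (fun h4 => by linarith) fun h4 => by linarith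

theorem map_pow_two_le_of_stableLength_eq_zero (hN : IsHyperbolicNorm N D) {g : G}
    (hg : stableLength N g = 0) : N (g ^ 2) ≤ N g + D := by
  linarith [hN.sub_sub_le_stableLength g]

theorem exists_powersRadius_conj_le_sub_one (hN : IsHyperbolicNorm N D)
    (hgeo : IsGeodesicNorm N) {g : G} (hg : stableLength N g = 0) {r M : ℕ}
    (hr : 2 * D + 1 ≤ r) (hR : 4 * r + 1 < powersRadius N M g) :
    ∃ z, powersRadius N M (z⁻¹ * g * z) ≤ powersRadius N M g - 1 := by
  obtain ⟨j, hjM, hj⟩ := exists_map_pow_eq_powersRadius (N := N) (M := M) (g := g)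
  have hD := hN.nonneg
  obtain ⟨z, hz, hzj⟩ := hgeo (g ^ j) r (by linarith)
  refine ⟨z, powersRadius_le_iff.mpr fun i hi => ?_⟩
  have hconj : (z⁻¹ * g * z) ^ i = z⁻¹ * g ^ i * z := by
    simpa only [inv_inv] using conj_pow (a := z⁻¹) (b := g) (i := i)
  rw [hconj]
  rcases lt_or_ge (N (g ^ i)) (2 * r) with hshort | hlong
  · have := map_mul_mul_inv_le N z⁻¹ (g ^ i)
    rw [inv_inv, map_inv_eq_map] at this
    linarith
  · have hτ : stableLength N (g ^ i) = 0 := by rw [stableLength_pow, hg, mul_zero]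
    have hshorter := hN.map_inv_mul_mul_le (hN.map_pow_two_le_of_stableLength_eq_zero hτ)
      (hz ▸ hzj) (hj ▸ map_inv_pow_mul_pow_le_powersRadius hi hjM) (hz ▸ hlong)
    have hiR := map_pow_le_powersRadius (N := N) (g := g) hi
    refine hshorter.trans (le_sub_iff_add_le.mp ?_)
    exact max_le (by linarith) (by linarith)

theorem exists_powersRadius_conj_le (hN : IsHyperbolicNorm N D) (hgeo : IsGeodesicNorm N)
    {g : G} (hg : stableLength N g = 0) {r : ℕ} (hr : 2 * D + 1 ≤ r) (M : ℕ) :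
    ∃ x, powersRadius N M (x * g * x⁻¹) ≤ 4 * r + 1 := by
  have hbdd : BddBelow (Set.range fun x => powersRadius N M (x * g * x⁻¹)) :=
    ⟨0, by rintro _ ⟨x, rfl⟩; exact powersRadius_nonneg⟩
  obtain ⟨x, hx⟩ := exists_lt_of_ciInf_lt (lt_add_one (⨅ x, powersRadius N M (x * g * x⁻¹)))
  refine ⟨x, not_lt.mp fun hlarge => ?_⟩
  have hτ : stableLength N (x * g * x⁻¹) = 0 :=
    (stableLength_eq_of_isConj (isConj_iff.mpr ⟨x, rfl⟩)).symm.trans hg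
  obtain ⟨z, hz⟩ := hN.exists_powersRadius_conj_le_sub_one hgeo hτ hr hlarge
  have hmin := ciInf_le hbdd (z⁻¹ * x)
  have hconj : z⁻¹ * x * g * (z⁻¹ * x)⁻¹ = z⁻¹ * (x * g * x⁻¹) * z := by group
  rw [hconj] at hmin
  linarith

theorem isOfFinOrder_of_stableLength_eq_zero (hN : IsHyperbolicNorm N D)
    (hgeo : IsGeodesicNorm N) (hprop : IsProperNorm N) {g : G} (hg : stableLength N g = 0) :
    IsOfFinOrder g := by
  obtain ⟨r, hr⟩ := exists_nat_ge (2 * D + 1)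
  exact isOfFinOrder_of_powersRadius_conj_le hprop (hN.exists_powersRadius_conj_le hgeo hg hr)

theorem map_mul_add_map_inv_mul_le (hN : IsHyperbolicNorm N D) {x y : G} (hxy : Commute x y) :
    N (x * y) + N (x⁻¹ * y) ≤ 2 * max (N x) (N y) + D := by
  have h4 := hN 1 (x * y) x y
  have e₁ : (x * y)⁻¹ * x = y⁻¹ := by group
  have e₂ : (x * y)⁻¹ * y = x⁻¹ := by rw [hxy.eq]; group
  simp only [e₁, e₂, inv_one, one_mul, map_inv_eq_map] at h4
  rwa [← two_mul, ← two_mul, ← mul_max_of_nonneg _ _ zero_le_two] at h4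

theorem map_pow_two_add_map_pow_two_le (hN : IsHyperbolicNorm N D) {x y : G}
    (hxy : Commute x y) :
    N (x ^ 2) + N (y ^ 2) ≤ 2 * max (N (x * y)) (N (x⁻¹ * y)) + D := by
  have h4 := hN 1 (x ^ 2) (x * y) (x * y⁻¹)
  have e₁ : (x * y)⁻¹ * (x * y⁻¹) = (y ^ 2)⁻¹ := by group
  have e₂ : (x ^ 2)⁻¹ * (x * y⁻¹) = (x * y)⁻¹ := by rw [hxy.eq]; group
  have e₃ : (x ^ 2)⁻¹ * (x * y) = x⁻¹ * y := by group
  have e₄ : x * y⁻¹ = (x⁻¹ * y)⁻¹ := by rw [hxy.inv_right.eq]; group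
  rw [e₁, e₂, e₃, e₄] at h4
  simp only [inv_one, one_mul, map_inv_eq_map] at h4
  rwa [← two_mul, ← two_mul, ← mul_max_of_nonneg _ _ zero_le_two] at h4

theorem stableLength_eq_zero_or_of_isConj_mul (hN : IsHyperbolicNorm N D) {x y : G}
    (hxy : Commute x y) (hconj : IsConj (x * y) (x⁻¹ * y)) :
    stableLength N x = 0 ∨ stableLength N y = 0 := by
  have hdiag : stableLength N (x * y) + stableLength N (x⁻¹ * y) ≤
      2 * max (stableLength N x) (stableLength N y) :=
    stableLength_add_le_max fun n => by
      simpa only [hxy.mul_pow, hxy.inv_left.mul_pow, inv_pow]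
        using hN.map_mul_add_map_inv_mul_le (hxy.pow_pow n n)
  have hsides : stableLength N (x ^ 2) + stableLength N (y ^ 2) ≤
      2 * max (stableLength N (x * y)) (stableLength N (x⁻¹ * y)) :=
    stableLength_add_le_max fun n => by
      simpa only [hxy.mul_pow, hxy.inv_left.mul_pow, inv_pow, pow_right_comm _ 2 n]
        using hN.map_pow_two_add_map_pow_two_le (hxy.pow_pow n n)
  rw [stableLength_pow, stableLength_pow, ← stableLength_eq_of_isConj hconj, max_self] at hsides
  rw [← stableLength_eq_of_isConj hconj] at hdiag
  have hsum : stableLength N x + stableLength N y ≤ max (stableLength N x) (stableLength N y) := by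
    push_cast at hsides
    linarith
  have hx := stableLength_nonneg N x
  have hy := stableLength_nonneg N y
  rcases le_max_iff.mp hsum with hle | hle
  · exact .inr (by linarith)
  · exact .inl (by linarith)

end IsHyperbolicNorm

/-! ### Elements conjugate to their inverse -/

section Inversion

variable {G : Type*} [Group G]

theorem commute_pow_two_of_conj_eq_inv {t g : G} (h : t * g * t⁻¹ = g⁻¹) :
    Commute g (t ^ 2) := by
  have ht : SemiconjBy t g g⁻¹ := (mul_inv_eq_iff_eq_mul.mp h :)
  have ht' : SemiconjBy t g⁻¹ g := by simpa only [inv_inv] using ht.inv_right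
  rw [pow_two]
  exact (ht'.mul_left ht).symm

theorem odd_orderOf_of_isOfFinOrder (h₂ : ∀ g : G, g ^ 2 = 1 → g = 1) {t : G}
    (ht : IsOfFinOrder t) : Odd (orderOf t) := by
  rw [← Nat.not_even_iff_odd]
  rintro ⟨k, hk⟩
  have hk_pos : 0 < k := by have := ht.orderOf_pos; omega
  have hroot : t ^ k = 1 := h₂ _ (by rw [← pow_mul, mul_two, ← hk, pow_orderOf_eq_one])
  have := orderOf_le_of_pow_eq_one hk_pos hroot
  omega

theorem pow_two_eq_one_of_conj_eq_inv (h₂ : ∀ g : G, g ^ 2 = 1 → g = 1) {t g : G}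
    (ht : IsOfFinOrder t) (h : t * g * t⁻¹ = g⁻¹) : g ^ 2 = 1 := by
  obtain ⟨k, hk⟩ := odd_orderOf_of_isOfFinOrder h₂ ht
  have ht_pow : (t ^ 2) ^ (k + 1) = t := by
    rw [← pow_mul, show 2 * (k + 1) = orderOf t + 1 by omega, pow_succ, pow_orderOf_eq_one,
      one_mul]
  have hcomm : Commute g t := ht_pow ▸ (commute_pow_two_of_conj_eq_inv h).pow_right (k + 1)
  rw [← hcomm.eq, mul_inv_cancel_right] at h
  rw [pow_two, mul_eq_one_iff_eq_inv, ← h]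

theorem IsHyperbolicNorm.isOfFinOrder_of_isConj_inv {N : GroupSeminorm G} {D : ℝ}
    (hN : IsHyperbolicNorm N D) (hgeo : IsGeodesicNorm N) (hprop : IsProperNorm N)
    (h₂ : ∀ g : G, g ^ 2 = 1 → g = 1) {g : G} (hg : IsConj g g⁻¹) : IsOfFinOrder g := by
  obtain ⟨t, ht⟩ := isConj_iff.mp hg
  have hconj : IsConj (g * t ^ 2) (g⁻¹ * t ^ 2) :=
    isConj_iff.mpr ⟨t, by rw [← ht]; group⟩
  rcases hN.stableLength_eq_zero_or_of_isConj_mul (commute_pow_two_of_conj_eq_inv ht) hconj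
    with hτ | hτ
  · exact hN.isOfFinOrder_of_stableLength_eq_zero hgeo hprop hτ
  · have ht_fin : IsOfFinOrder t :=
      (isOfFinOrder_pow.mp (hN.isOfFinOrder_of_stableLength_eq_zero hgeo hprop hτ)).resolve_right
        two_ne_zero
    exact isOfFinOrder_iff_pow_eq_one.mpr
      ⟨2, two_pos, pow_two_eq_one_of_conj_eq_inv h₂ ht_fin ht⟩

end Inversion

/-! ### The word norm -/

/-- Words in the alphabet `S ∪ S⁻¹`. -/
def IsWord {G : Type*} [Group G] (S : Set G) (l : List G) : Prop := ∀ x ∈ l, x ∈ S ∨ x⁻¹ ∈ S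

section Word

variable {G : Type*} [Group G] {S : Set G}

theorem IsWord.append {l l' : List G} (h : IsWord S l) (h' : IsWord S l') :
    IsWord S (l ++ l') := fun x hx =>
  (List.mem_append.mp hx).elim (h x) (h' x)

theorem IsWord.inv_reverse {l : List G} (h : IsWord S l) :
    IsWord S (l.map (·⁻¹)).reverse := by
  intro x hx
  obtain ⟨y, hy, rfl⟩ := List.mem_map.mp (List.mem_reverse.mp hx)
  simpa only [inv_inv] using (h y hy).symm

theorem exists_isWord_prod_eq (hS : Subgroup.closure S = ⊤) (g : G) :
    ∃ l, IsWord S l ∧ l.prod = g := by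
  have hg : g ∈ Subgroup.closure S := hS ▸ Subgroup.mem_top g
  rw [← Subgroup.mem_toSubmonoid, Subgroup.closure_toSubmonoid] at hg
  exact Submonoid.exists_list_of_mem_closure hg

theorem wordDist_eq_wordDist_one (g h : G) : wordDist S g h = wordDist S 1 (g⁻¹ * h) := by
  simp only [wordDist, inv_one, one_mul]

theorem wordDist_one_prod_le {l : List G} (hl : IsWord S l) :
    wordDist S 1 l.prod ≤ l.length :=
  csInf_le ⟨0, by rintro _ ⟨l, -, -, rfl⟩; positivity⟩ ⟨l, hl, by simp, rfl⟩

theorem exists_isWord_length_eq_wordDist (hS : Subgroup.closure S = ⊤) (g : G) :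
    ∃ l, IsWord S l ∧ l.prod = g ∧ l.length = wordDist S 1 g := by
  obtain ⟨l, ⟨hl, hlg⟩, hmin⟩ : ∃ l, MinimalFor (fun l => IsWord S l ∧ l.prod = g) List.length l :=
    exists_minimalFor_of_wellFoundedLT _ _ (exists_isWord_prod_eq hS g)
  refine ⟨l, hl, hlg, le_antisymm ?_ (hlg ▸ wordDist_one_prod_le hl)⟩
  refine le_csInf ⟨_, l, hl, by simpa using hlg, rfl⟩ ?_
  rintro _ ⟨l', hl', hl'g, rfl⟩
  have hle : l.length ≤ l'.length :=
    (le_total l.length l'.length).elim id (hmin ⟨hl', by simpa using hl'g⟩)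
  exact_mod_cast hle

theorem wordDist_one_mul_le (hS : Subgroup.closure S = ⊤) (g h : G) :
    wordDist S 1 (g * h) ≤ wordDist S 1 g + wordDist S 1 h := by
  obtain ⟨l, hl, rfl, hlen⟩ := exists_isWord_length_eq_wordDist hS g
  obtain ⟨l', hl', rfl, hlen'⟩ := exists_isWord_length_eq_wordDist hS h
  rw [← hlen, ← hlen', ← List.prod_append, ← Nat.cast_add, ← List.length_append]
  exact wordDist_one_prod_le (hl.append hl')

theorem wordDist_one_inv_le (hS : Subgroup.closure S = ⊤) (g : G) :
    wordDist S 1 g⁻¹ ≤ wordDist S 1 g := by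
  obtain ⟨l, hl, rfl, hlen⟩ := exists_isWord_length_eq_wordDist hS g
  rw [← hlen, List.prod_inv_reverse]
  simpa using wordDist_one_prod_le hl.inv_reverse

/-- The word norm `g ↦ d_S(1, g)`. The set `S` has to generate `G`, as otherwise elements outside
`closure S` get the junk value `sInf ∅ = 0` and subadditivity fails. -/
noncomputable def wordNorm (hS : Subgroup.closure S = ⊤) : GroupSeminorm G where
  toFun := wordDist S 1
  map_one' := by
    obtain ⟨l, -, -, hlen⟩ := exists_isWord_length_eq_wordDist hS 1
    refine le_antisymm ?_ (hlen ▸ Nat.cast_nonneg _)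
    simpa using wordDist_one_prod_le (S := S) (l := []) (by simp [IsWord])
  mul_le' := wordDist_one_mul_le hS
  inv' g := le_antisymm (wordDist_one_inv_le hS g)
    (by simpa only [inv_inv] using wordDist_one_inv_le hS g⁻¹)

theorem wordDist_eq_wordNorm (hS : Subgroup.closure S = ⊤) (g h : G) :
    wordDist S g h = wordNorm hS (g⁻¹ * h) :=
  wordDist_eq_wordDist_one g h

theorem finite_setOf_isWord_length_le (hfin : S.Finite) (n : ℕ) :
    {l : List G | IsWord S l ∧ l.length ≤ n}.Finite := by
  have : Finite ↥(S ∪ S⁻¹) := hfin.union hfin.inv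
  refine ((List.finite_length_le ↥(S ∪ S⁻¹) n).image (List.map Subtype.val)).subset ?_
  rintro l ⟨hl, hlen⟩
  lift l to List ↥(S ∪ S⁻¹) using hl
  exact ⟨l, by simpa using hlen, rfl⟩

theorem isProperNorm_wordNorm (hfin : S.Finite) (hS : Subgroup.closure S = ⊤) :
    IsProperNorm (wordNorm hS) := by
  intro R
  refine ((finite_setOf_isWord_length_le hfin ⌊R⌋₊).image List.prod).subset fun g hg => ?_
  obtain ⟨l, hl, hlg, hlen⟩ := exists_isWord_length_eq_wordDist hS g
  exact ⟨l, ⟨hl, Nat.le_floor (hlen.trans_le hg)⟩, hlg⟩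

theorem isGeodesicNorm_wordNorm (hS : Subgroup.closure S = ⊤) :
    IsGeodesicNorm (wordNorm hS) := by
  intro g r hr
  obtain ⟨l, hl, rfl, hlen⟩ := exists_isWord_length_eq_wordDist hS g
  have hlen' : (l.length : ℝ) = wordNorm hS l.prod := hlen
  have hrl : r ≤ l.length := by exact_mod_cast hr.trans_eq hlen'.symm
  have hprod : (l.take r).prod * (l.drop r).prod = l.prod := by
    rw [← List.prod_append, List.take_append_drop]
  have htake : wordNorm hS (l.take r).prod ≤ r :=
    (wordDist_one_prod_le fun x hx => hl x (List.mem_of_mem_take hx)).trans_eq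
      (by rw [List.length_take_of_le hrl])
  have hdrop : wordNorm hS (l.drop r).prod ≤ l.length - r :=
    (wordDist_one_prod_le fun x hx => hl x (List.mem_of_mem_drop hx)).trans_eq
      (by rw [List.length_drop, Nat.cast_sub hrl])
  have hadd := map_mul_le_add (wordNorm hS) (l.take r).prod (l.drop r).prod
  rw [hprod] at hadd
  refine ⟨(l.take r).prod, by linarith, ?_⟩
  rw [← hprod, inv_mul_cancel_left, hprod]
  linarith

theorem isHyperbolicNorm_wordNorm (hS : Subgroup.closure S = ⊤) {δ : ℝ}
    (hδ : ∀ w x y z : G,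
      gromovProd S w x y ≥ min (gromovProd S w x z) (gromovProd S w y z) - δ) :
    IsHyperbolicNorm (wordNorm hS) (2 * δ) := by
  intro x y z w
  have h := hδ w x y z
  simp only [gromovProd, wordDist_eq_wordNorm hS, ge_iff_le, sub_le_iff_le_add, min_le_iff] at h
  rw [← sub_le_iff_le_add, le_max_iff]
  rcases h with h | h
  · exact .inl (by linarith)
  · exact .inr (by linarith)

end Word

theorem stmt_13_general {G : Type*} [Group G] (hG : IsHyperbolicGroup G)
    (h₂ : ∀ g : G, g ^ 2 = 1 → g = 1) {h : G} (hh : ¬IsOfFinOrder h) {ω : G}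
    {m n : ℤ} (hm : IsConj ω (h ^ m)) (hn : IsConj ω (h ^ n)) : m = n := by
  obtain ⟨S, hfin, hS, δ, -, hδ⟩ := hG
  have hhyp := isHyperbolicNorm_wordNorm hS hδ
  have hgeo := isGeodesicNorm_wordNorm hS
  have hprop := isProperNorm_wordNorm hfin hS
  have hτ : stableLength (wordNorm hS) h ≠ 0 := fun h0 =>
    hh (hhyp.isOfFinOrder_of_stableLength_eq_zero hgeo hprop h0)
  have hmn : IsConj (h ^ m) (h ^ n) := hm.symm.trans hn
  rcases abs_eq_abs.mp (abs_eq_abs_of_isConj_zpow hτ hmn) with hmn_eq | rfl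
  · exact hmn_eq
  rw [zpow_neg] at hmn
  obtain ⟨k, hk, hpow⟩ := isOfFinOrder_iff_zpow_eq_one.mp
    (hhyp.isOfFinOrder_of_isConj_inv hgeo hprop h₂ hmn.symm)
  have hn0 : n = 0 := by
    by_contra hn0
    exact hh (isOfFinOrder_iff_zpow_eq_one.mpr ⟨n * k, mul_ne_zero hn0 hk, by rwa [zpow_mul]⟩)
  rw [hn0, neg_zero]

/-- In a torsion-free hyperbolic group, an element `ω` is conjugate to at most one power
of a nontrivial element `h`. -/
theorem stmt_13 {G : Type*} [Group G] (hG : IsHyperbolicGroup G)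
    (htf : ∀ g : G, g ≠ 1 → ∀ n : ℤ, n ≠ 0 → g ^ n ≠ 1)
    (h : G) (hh : h ≠ 1) (ω : G) (m n : ℤ)
    (hm : ∃ u : G, h ^ m = u * ω * u⁻¹)
    (hn : ∃ u : G, h ^ n = u * ω * u⁻¹) :
    m = n := by
  have h₂ (g : G) (hg : g ^ 2 = 1) : g = 1 :=
    by_contra fun hg1 => htf g hg1 2 two_ne_zero (by exact_mod_cast hg)
  have hinf : ¬IsOfFinOrder h := fun hfin =>
    let ⟨k, hk, hpow⟩ := isOfFinOrder_iff_zpow_eq_one.mp hfin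
    htf h hh k hk hpow
  exact stmt_13_general hG h₂ hinf (isConj_iff.mpr (hm.imp fun _ => Eq.symm))
    (isConj_iff.mpr (hn.imp fun _ => Eq.symm))
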